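/- Let m > d/2 be an integer and let B(x₀, r) ⊂ ℝ^d be a ball with r small. For f ∈ C^m on a neighborhood of B(x₀, r), U ⊂ B(x₀, r/2) measurable, ψ ∈ C_0^∞(U) nonnegative not identically zero, and Ψ(f) = (∫_U ψ)^{-1}∫_U fψ, there is a constant C = C(d, m) such that ‖f - Ψ(f)‖²_{L²(U)} ≤ C Σ_{1 ≤ |α| ≤ m} r^{2|α|} ‖∂^α f‖²_{L²(B(x₀, r))}. -/

import Mathlib

open MeasureTheory Metric Set
open scoped ENNReal

/-!
Expand `f y` by Taylor's formula at `z`. The terms of order `i ≤ m - 1` are pointwise at most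
`(diam B) ^ i ‖D^i f z‖`, and the remainder is an integral over `s ∈ (0, 1]` of
`s ^ (m - 1) D^m f` at the image of `z` under the homothety with centre `y` and ratio `s`. A
convex set `B ∋ y` is mapped into itself, and as the homothety scales volume by `s ^ d`,
composing with it costs a factor `s ^ (-d / p)` in the `L^p` norm over `z ∈ B`. By Minkowski's
integral inequality the remainder is therefore controlled by `∫ s ^ (m - 1 - d / p) ds`, which
is finite exactly when `m > d / p`. A second use of Minkowski's inequality averages the resulting
bound on `f - f y` over `y`.
-/

section Minkowski

variable {α β : Type*} [MeasurableSpace α] [MeasurableSpace β] {μ : Measure α} {ν : Measure β}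
  {p : ℝ≥0∞}

theorem eLpNorm_const_mul_of_aemeasurable (hp : p ≠ 0) (hp' : p ≠ ∞) {f : α → ℝ≥0∞}
    (hf : AEMeasurable f μ) (c : ℝ≥0∞) :
    eLpNorm (fun x ↦ c * f x) p μ = c * eLpNorm f p μ := by
  have hq : 0 < p.toReal := ENNReal.toReal_pos hp hp'
  simp only [eLpNorm_eq_lintegral_rpow_enorm_toReal hp hp', enorm_eq_self, one_div,
    ENNReal.mul_rpow_of_nonneg _ _ hq.le]
  rw [lintegral_const_mul'' _ (hf.pow_const _),
    ENNReal.mul_rpow_of_nonneg _ _ (inv_nonneg.2 hq.le), ENNReal.rpow_rpow_inv hq.ne']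

theorem lintegral_rpow_le_lintegral_rpow_mul_measure_univ {f : β → ℝ≥0∞} (hf : AEMeasurable f ν)
    {q : ℝ} (hq : 1 ≤ q) :
    (∫⁻ y, f y ∂ν) ^ q ≤ (∫⁻ y, f y ^ q ∂ν) * ν univ ^ (q - 1) := by
  have hq0 : 0 < q := one_pos.trans_le hq
  have h := ENNReal.rpow_le_rpow
    (eLpNorm'_le_eLpNorm'_mul_rpow_measure_univ one_pos hq hf.aestronglyMeasurable) hq0.le
  rw [ENNReal.mul_rpow_of_nonneg _ _ hq0.le, ← ENNReal.rpow_mul] at h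
  simpa [eLpNorm', sub_mul, ENNReal.rpow_inv_rpow hq0.ne', hq0.ne'] using h

theorem eLpNorm_lintegral_le_mul_measure_univ [SFinite μ] [SFinite ν] (hp : 1 ≤ p)
    (hp' : p ≠ ∞) {F : α → β → ℝ≥0∞} (hF : AEMeasurable F.uncurry (μ.prod ν)) {K : ℝ≥0∞}
    (hK : ∀ᵐ y ∂ν, eLpNorm (F · y) p μ ≤ K) :
    eLpNorm (fun x ↦ ∫⁻ y, F x y ∂ν) p μ ≤ K * ν univ := by
  have hp0 : p ≠ 0 := (one_pos.trans_le hp).ne'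
  have hq : 0 < p.toReal := ENNReal.toReal_pos hp0 hp'
  have hq1 : 1 ≤ p.toReal := by simpa using ENNReal.toReal_mono hp' hp
  have hFq : AEMeasurable (Function.uncurry fun x y ↦ F x y ^ p.toReal) (μ.prod ν) :=
    hF.pow_const _
  have hFx : ∀ᵐ x ∂μ, AEMeasurable (F x) ν :=
    hF.aestronglyMeasurable.prodMk_left.mono fun x hx ↦ hx.aemeasurable
  have hpow : ν univ * ν univ ^ (p.toReal - 1) = ν univ ^ p.toReal := by
    simpa using (ENNReal.rpow_add_of_nonneg (x := ν univ) 1 (p.toReal - 1) zero_le_one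
      (sub_nonneg.2 hq1)).symm
  simp only [eLpNorm_eq_lintegral_rpow_enorm_toReal hp0 hp', enorm_eq_self, one_div,
    ENNReal.rpow_inv_le_iff hq] at hK ⊢
  calc ∫⁻ x, (∫⁻ y, F x y ∂ν) ^ p.toReal ∂μ
      ≤ ∫⁻ x, (∫⁻ y, F x y ^ p.toReal ∂ν) * ν univ ^ (p.toReal - 1) ∂μ :=
        lintegral_mono_ae <| hFx.mono fun x hx ↦
          lintegral_rpow_le_lintegral_rpow_mul_measure_univ hx hq1
    _ = (∫⁻ y, ∫⁻ x, F x y ^ p.toReal ∂μ ∂ν) * ν univ ^ (p.toReal - 1) := by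
        rw [lintegral_mul_const'' _ hFq.lintegral_prod_right, lintegral_lintegral_swap hFq]
    _ ≤ K ^ p.toReal * ν univ * ν univ ^ (p.toReal - 1) := by
        gcongr
        exact (lintegral_mono_ae hK).trans_eq (lintegral_const _)
    _ = (K * ν univ) ^ p.toReal := by
        rw [mul_assoc, hpow, ENNReal.mul_rpow_of_nonneg _ _ hq.le]

theorem aemeasurable_eLpNorm_prod_left [SFinite μ] [SFinite ν] (hp : p ≠ 0) (hp' : p ≠ ∞)
    {F : α → β → ℝ≥0∞} (hF : AEMeasurable F.uncurry (μ.prod ν)) :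
    AEMeasurable (fun y ↦ eLpNorm (F · y) p μ) ν := by
  have hFq : AEMeasurable (Function.uncurry fun x y ↦ F x y ^ p.toReal) (μ.prod ν) :=
    hF.pow_const _
  simp only [eLpNorm_eq_lintegral_rpow_enorm_toReal hp hp', enorm_eq_self]
  exact hFq.lintegral_prod_left.pow_const _

theorem eLpNorm_lintegral_le [SFinite μ] [SigmaFinite ν] (hp : 1 ≤ p) (hp' : p ≠ ∞)
    {F : α → β → ℝ≥0∞} (hF : AEMeasurable F.uncurry (μ.prod ν)) :
    eLpNorm (fun x ↦ ∫⁻ y, F x y ∂ν) p μ ≤ ∫⁻ y, eLpNorm (F · y) p μ ∂ν := by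
  have hp0 : p ≠ 0 := (one_pos.trans_le hp).ne'
  refine ENNReal.le_of_forall_pos_le_add fun ε hε hfin ↦ ?_
  obtain ⟨g, hg0, hgm, hgε⟩ :=
    exists_pos_lintegral_lt_of_sigmaFinite ν (ENNReal.coe_ne_zero.2 hε.ne')
  have ha : AEMeasurable (fun y ↦ eLpNorm (F · y) p μ) ν :=
    aemeasurable_eLpNorm_prod_left hp0 hp' hF
  set w : β → ℝ≥0∞ := fun y ↦ eLpNorm (F · y) p μ + g y with hw
  -- Reweighting `ν` by `w` makes every slice have norm at most `1`; adding `g` keeps `w` positive.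
  have hwm : AEMeasurable w ν := ha.add hgm.coe_nnreal_ennreal.aemeasurable
  have hw0 : ∀ y, w y ≠ 0 := fun y ↦ by simp [hw, (hg0 y).ne']
  have hwtop : ∀ᵐ y ∂ν, w y ≠ ∞ :=
    (ae_lt_top' ha hfin.ne).mono fun y hy ↦ by simp [hw, hy.ne]
  have hνw : ν.withDensity w ≪ ν := withDensity_absolutelyContinuous ν w
  have hFw : AEMeasurable (Function.uncurry fun x y ↦ (w y)⁻¹ * F x y)
      (μ.prod (ν.withDensity w)) :=
    ((hwm.inv.comp_quasiMeasurePreserving Measure.quasiMeasurePreserving_snd).mul hF).mono_ac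
      (Measure.AbsolutelyContinuous.rfl.prod hνw)
  have hFy : ∀ᵐ y ∂ν, AEMeasurable (F · y) μ :=
    hF.prod_swap.aestronglyMeasurable.prodMk_left.mono fun y hy ↦ hy.aemeasurable
  have hK : ∀ᵐ y ∂ν.withDensity w, eLpNorm (fun x ↦ (w y)⁻¹ * F x y) p μ ≤ 1 :=
    hνw.ae_le <| hFy.mono fun y hy ↦ by
      rw [eLpNorm_const_mul_of_aemeasurable hp0 hp' hy]
      exact (mul_le_mul_right le_self_add _).trans (ENNReal.inv_mul_le_one _)
  have hweight : ∀ x, ∫⁻ y, F x y ∂ν = ∫⁻ y, (w y)⁻¹ * F x y ∂ν.withDensity w := fun x ↦ by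
    rw [lintegral_withDensity_eq_lintegral_mul_non_measurable₀ _ hwm
      (hwtop.mono fun y hy ↦ hy.lt_top)]
    refine lintegral_congr_ae (hwtop.mono fun y hy ↦ ?_)
    rw [Pi.mul_apply, ← mul_assoc, ENNReal.mul_inv_cancel (hw0 y) hy, one_mul]
  calc eLpNorm (fun x ↦ ∫⁻ y, F x y ∂ν) p μ
      = eLpNorm (fun x ↦ ∫⁻ y, (w y)⁻¹ * F x y ∂ν.withDensity w) p μ := by simp only [hweight]
    _ ≤ 1 * ν.withDensity w univ := eLpNorm_lintegral_le_mul_measure_univ hp hp' hFw hK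
    _ ≤ ∫⁻ y, eLpNorm (F · y) p μ ∂ν + ε := by
        rw [one_mul, withDensity_apply _ .univ, Measure.restrict_univ,
          lintegral_add_left' ha]
        gcongr

variable {F : Type*} [NormedAddCommGroup F] [NormedSpace ℝ F] [CompleteSpace F]

theorem enorm_sub_average_le_laverage [IsFiniteMeasure ν] [NeZero ν] {f : β → F}
    (hf : Integrable f ν) (a : F) : ‖a - ⨍ y, f y ∂ν‖ₑ ≤ ⨍⁻ y, ‖a - f y‖ₑ ∂ν := by
  have h : a - ⨍ y, f y ∂ν = ⨍ y, (a - f y) ∂ν := by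
    simp only [average]
    rw [integral_sub (integrable_const _) hf.to_average]
    simp
  rw [h]
  exact enorm_integral_le_lintegral_enorm _

theorem eLpNorm_sub_average_le_laverage {μ : Measure β} [SFinite μ] [IsFiniteMeasure ν] [NeZero ν]
    (hp : 1 ≤ p) (hp' : p ≠ ∞) {f : β → F} (hfμ : AEStronglyMeasurable f μ)
    (hfν : Integrable f ν) :
    eLpNorm (fun x ↦ f x - ⨍ y, f y ∂ν) p μ ≤ ⨍⁻ y, eLpNorm (fun x ↦ f x - f y) p μ ∂ν := by
  have hdiff : AEMeasurable (Function.uncurry fun x y ↦ ‖f x - f y‖ₑ)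
      (μ.prod ((ν univ)⁻¹ • ν)) :=
    (hfμ.comp_fst.sub hfν.to_average.aestronglyMeasurable.comp_snd).enorm
  calc eLpNorm (fun x ↦ f x - ⨍ y, f y ∂ν) p μ
      ≤ eLpNorm (fun x ↦ ⨍⁻ y, ‖f x - f y‖ₑ ∂ν) p μ :=
        eLpNorm_mono_enorm fun x ↦ by simpa using enorm_sub_average_le_laverage hfν (f x)
    _ ≤ ⨍⁻ y, eLpNorm (fun x ↦ ‖f x - f y‖ₑ) p μ ∂ν :=
        eLpNorm_lintegral_le hp hp' hdiff
    _ = _ := by simp only [eLpNorm_enorm]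

end Minkowski

section Contraction

variable {E : Type*} [NormedAddCommGroup E] [NormedSpace ℝ E]

theorem mapsTo_homothety {B : Set E} (hB : Convex ℝ B) {y : E} (hy : y ∈ B) {s : ℝ}
    (hs : s ∈ Icc (0 : ℝ) 1) : MapsTo (AffineMap.homothety y s) B B := fun z hz ↦
  AffineMap.homothety_eq_lineMap y s z ▸ hB.lineMap_mem hy hz hs

theorem continuousOn_comp_homothety {G : Type*} [TopologicalSpace G] {B : Set E} (hB : Convex ℝ B)
    {y : E} (hy : y ∈ B) {g : E → G} (hg : ContinuousOn g B) :
    ContinuousOn (fun q : E × ℝ ↦ g (AffineMap.homothety y q.2 q.1)) (B ×ˢ Icc 0 1) := by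
  refine hg.comp ?_ fun q hq ↦ mapsTo_homothety hB hy hq.2 hq.1
  simp only [AffineMap.homothety_apply]
  fun_prop

theorem homothety_inv_leftInverse (y : E) {s : ℝ} (hs : s ≠ 0) :
    Function.LeftInverse (AffineMap.homothety y s⁻¹) (AffineMap.homothety y s) := fun z ↦ by
  rw [← AffineMap.comp_apply, ← AffineMap.homothety_mul, inv_mul_cancel₀ hs,
    AffineMap.homothety_one, AffineMap.id_apply]

theorem homothety_inv_rightInverse (y : E) {s : ℝ} (hs : s ≠ 0) :
    Function.RightInverse (AffineMap.homothety y s⁻¹) (AffineMap.homothety y s) := by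
  have h := homothety_inv_leftInverse y (inv_ne_zero hs)
  rwa [inv_inv] at h

variable [MeasurableSpace E] [BorelSpace E]

theorem measurableEmbedding_homothety (y : E) {s : ℝ} (hs : s ≠ 0) :
    MeasurableEmbedding (AffineMap.homothety y s) :=
  (Topology.IsOpenEmbedding.of_continuous_injective_isOpenMap
    (AffineMap.homothety_continuous y s) (homothety_inv_leftInverse y hs).injective
    (AffineMap.homothety_isOpenMap y s hs)).measurableEmbedding

variable [FiniteDimensional ℝ E] (μ : Measure E) [μ.IsAddHaarMeasure]

theorem map_homothety_addHaar (y : E) {s : ℝ} (hs : s ≠ 0) :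
    μ.map (AffineMap.homothety y s) = ENNReal.ofReal |(s ^ Module.finrank ℝ E)⁻¹| • μ := by
  ext t -
  rw [(measurableEmbedding_homothety y hs).map_apply,
    ← image_eq_preimage_of_inverse (homothety_inv_rightInverse y hs)
      (homothety_inv_leftInverse y hs), Measure.addHaar_image_homothety, inv_pow,
    Measure.smul_apply, smul_eq_mul]

theorem map_homothety_restrict_le {B : Set E} (hB : Convex ℝ B) {y : E} (hy : y ∈ B) {s : ℝ}
    (hs : s ∈ Ioc (0 : ℝ) 1) :
    (μ.restrict B).map (AffineMap.homothety y s) ≤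
      ENNReal.ofReal |(s ^ Module.finrank ℝ E)⁻¹| • μ.restrict B := by
  have hmaps : B ⊆ AffineMap.homothety y s ⁻¹' B :=
    mapsTo_homothety hB hy (Ioc_subset_Icc_self hs)
  have hemb := measurableEmbedding_homothety y hs.1.ne'
  calc (μ.restrict B).map (AffineMap.homothety y s)
      ≤ (μ.restrict (AffineMap.homothety y s ⁻¹' B)).map (AffineMap.homothety y s) :=
        Measure.map_mono (Measure.restrict_mono hmaps le_rfl) hemb.measurable
    _ = _ := by
        rw [← hemb.restrict_map, map_homothety_addHaar μ y hs.1.ne', Measure.restrict_smul]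

theorem eLpNorm_comp_homothety_restrict_le {ε : Type*} [TopologicalSpace ε] [ContinuousENorm ε]
    {p : ℝ≥0∞} (hp : p ≠ ∞) {B : Set E} (hB : Convex ℝ B) {y : E} (hy : y ∈ B) {s : ℝ}
    (hs : s ∈ Ioc (0 : ℝ) 1) (g : E → ε) :
    eLpNorm (g ∘ AffineMap.homothety y s) p (μ.restrict B) ≤
      ENNReal.ofReal (s ^ (-(Module.finrank ℝ E / p.toReal))) * eLpNorm g p (μ.restrict B) := by
  have hscale : ENNReal.ofReal |(s ^ Module.finrank ℝ E)⁻¹| ^ (1 / p).toReal =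
      ENNReal.ofReal (s ^ (-(Module.finrank ℝ E / p.toReal))) := by
    have hpos : 0 < (s ^ Module.finrank ℝ E)⁻¹ := inv_pos.2 (pow_pos hs.1 _)
    rw [abs_of_pos hpos, ENNReal.ofReal_rpow_of_pos hpos, ← Real.rpow_natCast,
      ← Real.rpow_neg hs.1.le, ← Real.rpow_mul hs.1.le]
    congr 2
    simp [div_eq_mul_inv]
  rw [← (measurableEmbedding_homothety y hs.1.ne').eLpNorm_map_measure]
  calc _ ≤ _ := eLpNorm_mono_measure g (map_homothety_restrict_le μ hB hy hs)
    _ = _ := by rw [eLpNorm_smul_measure_of_ne_top hp, hscale, smul_eq_mul]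

theorem lintegral_Ioc_zero_one_rpow {b : ℝ} (hb : -1 < b) :
    ∫⁻ s in Ioc (0 : ℝ) 1, ENNReal.ofReal (s ^ b) = ENNReal.ofReal (b + 1)⁻¹ := by
  have hint : IntegrableOn (fun s : ℝ ↦ s ^ b) (Ioc 0 1) :=
    (intervalIntegrable_iff_integrableOn_Ioc_of_le zero_le_one).1
      (intervalIntegral.intervalIntegrable_rpow' hb)
  rw [← ofReal_integral_eq_lintegral_ofReal hint
    (ae_restrict_of_forall_mem measurableSet_Ioc fun s hs ↦ Real.rpow_nonneg hs.1.le b),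
    ← intervalIntegral.integral_of_le zero_le_one, integral_rpow (Or.inl hb)]
  simp [Real.zero_rpow (by linarith : b + 1 ≠ 0)]

theorem aemeasurable_rpow_mul_enorm_comp_homothety {G : Type*} [NormedAddCommGroup G] {B : Set E}
    (hB : Convex ℝ B) (hBm : MeasurableSet B) {y : E} (hy : y ∈ B) {g : E → G}
    (hg : ContinuousOn g B) (a : ℝ) :
    AEMeasurable (Function.uncurry fun (z : E) (s : ℝ) ↦
      ENNReal.ofReal (s ^ a) * ‖g (AffineMap.homothety y s z)‖ₑ)
      ((μ.restrict B).prod (volume.restrict (Ioc 0 1))) := by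
  have hcont : ContinuousOn (fun q : E × ℝ ↦ ‖g (AffineMap.homothety y q.2 q.1)‖ₑ)
      (B ×ˢ Ioc 0 1) :=
    (continuousOn_comp_homothety hB hy hg).enorm.mono (prod_mono_right Ioc_subset_Icc_self)
  rw [Measure.prod_restrict]
  exact (Measurable.aemeasurable (by fun_prop)).mul
    (hcont.aemeasurable (hBm.prod measurableSet_Ioc))

theorem eLpNorm_lintegral_rpow_mul_homothety_le {G : Type*} [NormedAddCommGroup G] {p : ℝ≥0∞}
    (hp : 1 ≤ p) (hp' : p ≠ ∞) {a : ℝ} (ha : Module.finrank ℝ E / p.toReal < a + 1) {B : Set E}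
    (hB : Convex ℝ B) (hBm : MeasurableSet B) {y : E} (hy : y ∈ B) {g : E → G}
    (hg : ContinuousOn g B) :
    eLpNorm (fun z ↦ ∫⁻ s in Ioc (0 : ℝ) 1,
        ENNReal.ofReal (s ^ a) * ‖g (AffineMap.homothety y s z)‖ₑ) p (μ.restrict B) ≤
      ENNReal.ofReal (a + 1 - Module.finrank ℝ E / p.toReal)⁻¹ *
        eLpNorm g p (μ.restrict B) := by
  set e : ℝ := Module.finrank ℝ E / p.toReal
  have hslice : ∀ s ∈ Ioc (0 : ℝ) 1,
      AEMeasurable (fun z ↦ ‖g (AffineMap.homothety y s z)‖ₑ) (μ.restrict B) := fun s hs ↦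
    (hg.comp (AffineMap.homothety_continuous y s).continuousOn
      (mapsTo_homothety hB hy (Ioc_subset_Icc_self hs))).enorm.aemeasurable hBm
  calc _ ≤ ∫⁻ s in Ioc (0 : ℝ) 1, eLpNorm (fun z ↦ ENNReal.ofReal (s ^ a) *
          ‖g (AffineMap.homothety y s z)‖ₑ) p (μ.restrict B) :=
        eLpNorm_lintegral_le hp hp' (aemeasurable_rpow_mul_enorm_comp_homothety μ hB hBm hy hg a)
    _ ≤ ∫⁻ s in Ioc (0 : ℝ) 1, ENNReal.ofReal (s ^ (a - e)) * eLpNorm g p (μ.restrict B) := by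
        refine setLIntegral_mono' measurableSet_Ioc fun s hs ↦ ?_
        rw [eLpNorm_const_mul_of_aemeasurable (one_pos.trans_le hp).ne' hp' (hslice s hs),
          eLpNorm_enorm, sub_eq_add_neg, Real.rpow_add hs.1,
          ENNReal.ofReal_mul (Real.rpow_nonneg hs.1.le a), mul_assoc]
        gcongr
        exact eLpNorm_comp_homothety_restrict_le μ hp' hB hy hs g
    _ = _ := by
        rw [lintegral_mul_const _ (by fun_prop), lintegral_Ioc_zero_one_rpow (by linarith),
          sub_add_eq_add_sub]

end Contraction

section Taylor

variable {E F : Type*} [NormedAddCommGroup E] [NormedSpace ℝ E] [NormedAddCommGroup F]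
  [NormedSpace ℝ F] {n : ℕ} {f : E → F} {y z : E}

theorem enorm_inv_factorial_le_one (k : ℕ) : ‖(k.factorial : ℝ)⁻¹‖ₑ ≤ 1 := by
  rw [Real.enorm_of_nonneg (by positivity), ENNReal.ofReal_le_one]
  exact inv_le_one_of_one_le₀ (by exact_mod_cast k.factorial_pos)

theorem enorm_apply_const_le {k : ℕ} (A : E [×k]→L[ℝ] F) (v : E) :
    ‖A fun _ ↦ v‖ₑ ≤ ‖v‖ₑ ^ k * ‖A‖ₑ := by
  have h : ‖A fun _ ↦ v‖₊ ≤ ‖v‖₊ ^ k * ‖A‖₊ := by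
    simpa [mul_comm] using A.le_opNNNorm fun _ ↦ v
  simpa only [enorm_eq_nnnorm] using mod_cast h

theorem sub_eq_sum_add_integral_iteratedFDeriv_homothety [CompleteSpace F]
    (hf : ∀ x ∈ segment ℝ y z, ContDiffAt ℝ (n + 1) f x) :
    f y - f z = ∑ k ∈ Finset.Icc 1 n,
        (k.factorial : ℝ)⁻¹ • iteratedFDeriv ℝ k f z (fun _ ↦ y - z) +
      (n.factorial : ℝ)⁻¹ • ∫ s in (0 : ℝ)..1,
        s ^ n • iteratedFDeriv ℝ (n + 1) f (AffineMap.homothety y s z) (fun _ ↦ y - z) := by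
  have hpoint : ∀ t : ℝ, AffineMap.homothety y (1 - t) z = z + t • (y - z) := fun t ↦ by
    rw [AffineMap.homothety_apply, vsub_eq_sub, vadd_eq_add]
    module
  have htaylor := map_add_eq_sum_add_integral_iteratedFDeriv (f := f) (x := z) (y := y - z)
    (n := n) fun t ht ↦ hf _ <| by
      rw [segment_symm, segment_eq_image']
      exact mem_image_of_mem _ ht
  have hsubst := intervalIntegral.integral_comp_sub_left (a := 0) (b := 1) (fun s : ℝ ↦ s ^ n •
    iteratedFDeriv ℝ (n + 1) f (AffineMap.homothety y s z) (fun _ ↦ y - z)) 1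
  simp only [hpoint, sub_self, sub_zero] at hsubst
  rw [add_sub_cancel, Finset.range_eq_Ico, Finset.sum_eq_sum_Ico_succ_bot n.succ_pos,
    zero_add, Nat.succ_eq_add_one, Finset.Ico_add_one_right_eq_Icc] at htaylor
  rw [← hsubst, htaylor]
  simp [add_assoc]

theorem enorm_sub_le_sum_add_lintegral_homothety [CompleteSpace F]
    (hf : ∀ x ∈ segment ℝ y z, ContDiffAt ℝ (n + 1) f x) :
    ‖f z - f y‖ₑ ≤ ∑ k ∈ Finset.Icc 1 n, ‖z - y‖ₑ ^ k * ‖iteratedFDeriv ℝ k f z‖ₑ +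
      ‖z - y‖ₑ ^ (n + 1) * ∫⁻ s in Ioc (0 : ℝ) 1,
        ENNReal.ofReal (s ^ n) * ‖iteratedFDeriv ℝ (n + 1) f (AffineMap.homothety y s z)‖ₑ := by
  rw [enorm_sub_rev, enorm_sub_rev z y, sub_eq_sum_add_integral_iteratedFDeriv_homothety hf,
    ← intervalIntegral.integral_smul, intervalIntegral.integral_of_le zero_le_one,
    ← lintegral_const_mul' _ _ (by simp)]
  refine (enorm_add_le _ _).trans (add_le_add ((enorm_sum_le _ _).trans ?_)
    ((enorm_integral_le_lintegral_enorm _).trans ?_))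
  · gcongr with k
    rw [enorm_smul]
    exact (mul_le_of_le_one_left' (enorm_inv_factorial_le_one k)).trans
      (enorm_apply_const_le _ _)
  · refine setLIntegral_mono' measurableSet_Ioc fun s hs ↦ ?_
    rw [enorm_smul, enorm_smul, Real.enorm_of_nonneg (pow_nonneg hs.1.le n)]
    refine (mul_le_of_le_one_left' (enorm_inv_factorial_le_one n)).trans ?_
    rw [mul_left_comm]
    gcongr
    exact enorm_apply_const_le _ _

end Taylor

section Deviation

variable {E F : Type*} [NormedAddCommGroup E] [NormedSpace ℝ E] [FiniteDimensional ℝ E]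
  [MeasurableSpace E] [BorelSpace E] [NormedAddCommGroup F] [NormedSpace ℝ F] [CompleteSpace F]
  (μ : Measure E) [μ.IsAddHaarMeasure] {p : ℝ≥0∞} {n m : ℕ} {B : Set E} {f : E → F} {y : E}

theorem eLpNorm_sub_const_le_sum_add (hp : 1 ≤ p) (hp' : p ≠ ∞)
    (hn : Module.finrank ℝ E / p.toReal < n + 1) (hB : Convex ℝ B) (hBm : MeasurableSet B)
    (hf : ∀ x ∈ B, ContDiffAt ℝ (n + 1) f x) (hy : y ∈ B) :
    eLpNorm (fun z ↦ f z - f y) p (μ.restrict B) ≤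
      ∑ i ∈ Finset.Icc 1 n,
        ediam B ^ i * eLpNorm (iteratedFDeriv ℝ i f) p (μ.restrict B) +
      ediam B ^ (n + 1) * (ENNReal.ofReal (n + 1 - Module.finrank ℝ E / p.toReal)⁻¹ *
        eLpNorm (iteratedFDeriv ℝ (n + 1) f) p (μ.restrict B)) := by
  have hp0 : p ≠ 0 := (one_pos.trans_le hp).ne'
  have hcont : ∀ i ≤ n + 1, ContinuousOn (iteratedFDeriv ℝ i f) B := fun i hi x hx ↦
    ((hf x hx).continuousAt_iteratedFDeriv (by exact_mod_cast hi)).continuousWithinAt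
  have hmeas : ∀ i ∈ Finset.Icc 1 n, AEMeasurable (‖iteratedFDeriv ℝ i f ·‖ₑ) (μ.restrict B) :=
    fun i hi ↦ (hcont i (by have := Finset.mem_Icc.1 hi; omega)).enorm.aemeasurable hBm
  set R : E → ℝ≥0∞ := fun z ↦ ∫⁻ s in Ioc (0 : ℝ) 1,
    ENNReal.ofReal (s ^ (n : ℝ)) * ‖iteratedFDeriv ℝ (n + 1) f (AffineMap.homothety y s z)‖ₑ
  have hR : AEMeasurable R (μ.restrict B) :=
    (aemeasurable_rpow_mul_enorm_comp_homothety μ hB hBm hy (hcont _ le_rfl) n).lintegral_prod_right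
  calc eLpNorm (fun z ↦ f z - f y) p (μ.restrict B)
      ≤ eLpNorm (fun z ↦ ∑ i ∈ Finset.Icc 1 n, ediam B ^ i * ‖iteratedFDeriv ℝ i f z‖ₑ +
          ediam B ^ (n + 1) * R z) p (μ.restrict B) := by
        refine eLpNorm_mono_enorm_ae <| ae_restrict_of_forall_mem hBm fun z hz ↦ ?_
        have htaylor := enorm_sub_le_sum_add_lintegral_homothety fun x hx ↦
          hf x (hB.segment_subset hy hz hx)
        have hzy : ‖z - y‖ₑ ≤ ediam B := edist_eq_enorm_sub z y ▸ edist_le_ediam_of_mem hz hy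
        simp only [R, Real.rpow_natCast, enorm_eq_self]
        exact htaylor.trans (by gcongr)
    _ ≤ ∑ i ∈ Finset.Icc 1 n,
          eLpNorm (fun z ↦ ediam B ^ i * ‖iteratedFDeriv ℝ i f z‖ₑ) p (μ.restrict B) +
        eLpNorm (fun z ↦ ediam B ^ (n + 1) * R z) p (μ.restrict B) := by
        refine (eLpNorm_add_le (Finset.aemeasurable_fun_sum _ fun i hi ↦
          (hmeas i hi).const_mul _).aestronglyMeasurable (hR.const_mul _).aestronglyMeasurable
          hp).trans (add_le_add_left ?_ _)
        rw [← Finset.sum_fn]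
        exact eLpNorm_sum_le (fun i hi ↦ ((hmeas i hi).const_mul _).aestronglyMeasurable) hp
    _ ≤ _ := by
        rw [eLpNorm_const_mul_of_aemeasurable hp0 hp' hR]
        gcongr with i hi
        · rw [eLpNorm_const_mul_of_aemeasurable hp0 hp' (hmeas i hi), eLpNorm_enorm]
        · exact eLpNorm_lintegral_rpow_mul_homothety_le μ hp hp' hn hB hBm hy (hcont _ le_rfl)

theorem eLpNorm_sub_const_le_sum (hp : 1 ≤ p) (hp' : p ≠ ∞)
    (hm : Module.finrank ℝ E / p.toReal < m) (hB : Convex ℝ B) (hBm : MeasurableSet B)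
    (hf : ∀ x ∈ B, ContDiffAt ℝ m f x) (hy : y ∈ B) :
    eLpNorm (fun z ↦ f z - f y) p (μ.restrict B) ≤
      max 1 (ENNReal.ofReal (m - Module.finrank ℝ E / p.toReal)⁻¹) * ∑ i ∈ Finset.Icc 1 m,
        ediam B ^ i * eLpNorm (iteratedFDeriv ℝ i f) p (μ.restrict B) := by
  have hm0 : (0 : ℝ) < m := lt_of_le_of_lt (by positivity) hm
  obtain ⟨n, rfl⟩ : ∃ n, m = n + 1 := Nat.exists_eq_add_one.2 (by exact_mod_cast hm0)
  push_cast at hm hf ⊢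
  rw [Finset.sum_Icc_succ_top (by omega), mul_add]
  refine (eLpNorm_sub_const_le_sum_add μ hp hp' hm hB hBm hf hy).trans (add_le_add ?_ ?_)
  · exact le_mul_of_one_le_left' (le_max_left _ _)
  · rw [mul_left_comm]
    gcongr
    exact le_max_right _ _

theorem eLpNorm_sub_average_le_sum (hp : 1 ≤ p) (hp' : p ≠ ∞)
    (hm : Module.finrank ℝ E / p.toReal < m) (hB : Convex ℝ B) (hBm : MeasurableSet B)
    (hf : ∀ x ∈ B, ContDiffAt ℝ m f x) {ν : Measure E} [IsFiniteMeasure ν] [NeZero ν]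
    (hν : ∀ᵐ y ∂ν, y ∈ B) (hfν : Integrable f ν) :
    eLpNorm (fun z ↦ f z - ⨍ y, f y ∂ν) p (μ.restrict B) ≤
      max 1 (ENNReal.ofReal (m - Module.finrank ℝ E / p.toReal)⁻¹) * ∑ i ∈ Finset.Icc 1 m,
        ediam B ^ i * eLpNorm (iteratedFDeriv ℝ i f) p (μ.restrict B) := by
  have hcont : ContinuousOn f B := fun x hx ↦ (hf x hx).continuousAt.continuousWithinAt
  refine (eLpNorm_sub_average_le_laverage hp hp' (hcont.aestronglyMeasurable hBm) hfν).trans ?_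
  rw [← laverage_const ν (_ * _), laverage_eq', laverage_eq']
  exact lintegral_mono_ae <| Measure.ae_smul_measure
    (hν.mono fun y hy ↦ eLpNorm_sub_const_le_sum μ hp hp' hm hB hBm hf hy) _

end Deviation

section SquareIntegral

theorem integral_norm_sq_eq_toReal_eLpNorm_sq {α G : Type*} [MeasurableSpace α] {μ : Measure α}
    [NormedAddCommGroup G] {f : α → G} (hf : AEStronglyMeasurable f μ) :
    ∫ x, ‖f x‖ ^ 2 ∂μ = (eLpNorm f 2 μ).toReal ^ 2 := by
  rw [toReal_eLpNorm hf, lpNorm_eq_integral_norm_rpow_toReal two_ne_zero ENNReal.ofNat_ne_top hf]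
  simp only [ENNReal.toReal_ofNat, Real.rpow_ofNat]
  exact_mod_cast (Real.rpow_inv_natCast_pow (integral_nonneg fun x ↦ sq_nonneg ‖f x‖)
    two_ne_zero).symm

theorem memLp_of_continuousOn_isCompact {X G : Type*} [TopologicalSpace X] [MeasurableSpace X]
    [OpensMeasurableSpace X] [T2Space X] [NormedAddCommGroup G]
    {ν : Measure X} [IsFiniteMeasure ν] {p : ℝ≥0∞} {K : Set X} {f : X → G}
    (hf : ContinuousOn f K) (hK : IsCompact K) (hν : ∀ᵐ x ∂ν, x ∈ K) : MemLp f p ν := by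
  obtain ⟨C, hC⟩ := hK.exists_bound_of_continuousOn hf
  refine .of_bound ?_ C (hν.mono hC)
  rw [← Measure.restrict_eq_self_of_ae_mem hν]
  exact hf.aestronglyMeasurable_of_isCompact hK hK.measurableSet

theorem average_withDensity_ofReal {α G : Type*} [MeasurableSpace α] {μ : Measure α}
    [NormedAddCommGroup G] [NormedSpace ℝ G] {ψ : α → ℝ} (hψ : AEMeasurable ψ μ)
    (hψ0 : 0 ≤ᵐ[μ] ψ) (f : α → G) :
    ⨍ x, f x ∂μ.withDensity (fun x ↦ ENNReal.ofReal (ψ x)) =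
      (∫ x, ψ x ∂μ)⁻¹ • ∫ x, ψ x • f x ∂μ := by
  rw [average_eq, measureReal_def, withDensity_apply _ .univ, Measure.restrict_univ,
    ← integral_eq_lintegral_of_nonneg_ae hψ0 hψ.aestronglyMeasurable,
    integral_withDensity_eq_integral_toReal_smul₀ hψ.ennreal_ofReal (by simp)]
  congr 1
  exact integral_congr_ae (hψ0.mono fun x hx ↦ by simp only [ENNReal.toReal_ofReal hx])

variable {E F : Type*} [NormedAddCommGroup E] [NormedSpace ℝ E] [FiniteDimensional ℝ E]
  [MeasurableSpace E] [BorelSpace E] [NormedAddCommGroup F] [NormedSpace ℝ F]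
  {m : ℕ} {B : Set E} {f : E → F}

theorem memLp_iteratedFDeriv_of_contDiffAt_closure {ν : Measure E} [IsFiniteMeasure ν] {p : ℝ≥0∞}
    {i : ℕ} (hi : i ≤ m) (hB : Bornology.IsBounded B) (hf : ∀ x ∈ closure B, ContDiffAt ℝ m f x)
    (hν : ∀ᵐ y ∂ν, y ∈ B) : MemLp (iteratedFDeriv ℝ i f) p ν :=
  memLp_of_continuousOn_isCompact (fun x hx ↦ ((hf x hx).continuousAt_iteratedFDeriv
    (by exact_mod_cast hi)).continuousWithinAt) hB.isCompact_closure
    (hν.mono fun _ hy ↦ subset_closure hy)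

theorem integrable_of_contDiffAt_closure {ν : Measure E} [IsFiniteMeasure ν]
    (hB : Bornology.IsBounded B) (hf : ∀ x ∈ closure B, ContDiffAt ℝ m f x)
    (hν : ∀ᵐ y ∂ν, y ∈ B) : Integrable f ν :=
  memLp_one_iff_integrable.1 <| memLp_of_continuousOn_isCompact
    (fun x hx ↦ (hf x hx).continuousAt.continuousWithinAt) hB.isCompact_closure
    (hν.mono fun _ hy ↦ subset_closure hy)

variable [CompleteSpace F] (μ : Measure E) [μ.IsAddHaarMeasure]

theorem eLpNorm_two_sub_average_le_sum (hm : Module.finrank ℝ E < 2 * m) (hB : Convex ℝ B)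
    (hBm : MeasurableSet B) (hf : ∀ x ∈ B, ContDiffAt ℝ m f x) {ν : Measure E} [IsFiniteMeasure ν]
    [NeZero ν] (hν : ∀ᵐ y ∂ν, y ∈ B) (hfν : Integrable f ν) :
    eLpNorm (fun z ↦ f z - ⨍ y, f y ∂ν) 2 (μ.restrict B) ≤ 2 * ∑ i ∈ Finset.Icc 1 m,
      ediam B ^ i * eLpNorm (iteratedFDeriv ℝ i f) 2 (μ.restrict B) := by
  have hgap : (1 / 2 : ℝ) ≤ m - Module.finrank ℝ E / (2 : ℝ≥0∞).toReal := by
    have : (Module.finrank ℝ E + 1 : ℝ) ≤ 2 * m := by exact_mod_cast hm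
    rw [ENNReal.toReal_ofNat]
    linarith
  refine (eLpNorm_sub_average_le_sum μ one_le_two ENNReal.ofNat_ne_top (by linarith) hB hBm hf hν
    hfν).trans ?_
  gcongr
  refine max_le one_le_two (ENNReal.ofReal_le_of_le_toReal ?_)
  simpa using inv_anti₀ one_half_pos hgap

theorem toReal_eLpNorm_two_sub_average_le_sum (hm : Module.finrank ℝ E < 2 * m)
    (hB : Convex ℝ B) (hBm : MeasurableSet B) (hBb : Bornology.IsBounded B)
    (hf : ∀ x ∈ closure B, ContDiffAt ℝ m f x) {ν : Measure E} [IsFiniteMeasure ν] [NeZero ν]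
    (hν : ∀ᵐ y ∂ν, y ∈ B) :
    (eLpNorm (fun z ↦ f z - ⨍ y, f y ∂ν) 2 (μ.restrict B)).toReal ≤
      2 * ∑ i ∈ Finset.Icc 1 m,
        diam B ^ i * (eLpNorm (iteratedFDeriv ℝ i f) 2 (μ.restrict B)).toReal := by
  have : IsFiniteMeasure (μ.restrict B) := isFiniteMeasure_restrict.2 hBb.measure_lt_top.ne
  have hterm : ∀ i ∈ Finset.Icc 1 m,
      ediam B ^ i * eLpNorm (iteratedFDeriv ℝ i f) 2 (μ.restrict B) ≠ ∞ := fun i hi ↦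
    ENNReal.mul_ne_top (ENNReal.pow_ne_top hBb.ediam_ne_top)
      (memLp_iteratedFDeriv_of_contDiffAt_closure (Finset.mem_Icc.1 hi).2 hBb hf
        (ae_restrict_mem hBm)).eLpNorm_ne_top
  have h := ENNReal.toReal_mono
    (ENNReal.mul_ne_top ENNReal.ofNat_ne_top (ENNReal.sum_ne_top.2 hterm))
    (eLpNorm_two_sub_average_le_sum μ hm hB hBm (fun x hx ↦ hf x (subset_closure hx)) hν
      (integrable_of_contDiffAt_closure hBb hf hν))
  simpa [ENNReal.toReal_mul, ENNReal.toReal_sum hterm, diam] using h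

theorem setIntegral_norm_sub_average_sq_le_sum (hm : Module.finrank ℝ E < 2 * m)
    (hB : Convex ℝ B) (hBm : MeasurableSet B) (hBb : Bornology.IsBounded B)
    (hf : ∀ x ∈ closure B, ContDiffAt ℝ m f x) {ν : Measure E} [IsFiniteMeasure ν] [NeZero ν]
    (hν : ∀ᵐ y ∂ν, y ∈ B) :
    ∫ x in B, ‖f x - ⨍ y, f y ∂ν‖ ^ 2 ∂μ ≤
      4 * m * ∑ i ∈ Finset.Icc 1 m,
        diam B ^ (2 * i) * ∫ x in B, ‖iteratedFDeriv ℝ i f x‖ ^ 2 ∂μ := by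
  have : IsFiniteMeasure (μ.restrict B) := isFiniteMeasure_restrict.2 hBb.measure_lt_top.ne
  have hmemB : ∀ᵐ x ∂μ.restrict B, x ∈ B := ae_restrict_mem hBm
  have hfB : AEStronglyMeasurable f (μ.restrict B) :=
    (integrable_of_contDiffAt_closure hBb hf hmemB).aestronglyMeasurable
  rw [integral_norm_sq_eq_toReal_eLpNorm_sq (f := fun x ↦ f x - ⨍ y, f y ∂ν)
    (hfB.sub aestronglyMeasurable_const)]
  calc _ ≤ (2 * ∑ i ∈ Finset.Icc 1 m,
          diam B ^ i * (eLpNorm (iteratedFDeriv ℝ i f) 2 (μ.restrict B)).toReal) ^ 2 := by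
        gcongr
        exact toReal_eLpNorm_two_sub_average_le_sum μ hm hB hBm hBb hf hν
    _ ≤ 4 * (m * ∑ i ∈ Finset.Icc 1 m,
          (diam B ^ i * (eLpNorm (iteratedFDeriv ℝ i f) 2 (μ.restrict B)).toReal) ^ 2) := by
        rw [mul_pow, show (2 : ℝ) ^ 2 = 4 by norm_num]
        gcongr
        simpa using sq_sum_le_card_mul_sum_sq (s := Finset.Icc 1 m)
    _ = _ := by
        rw [← mul_assoc]
        congr 1
        refine Finset.sum_congr rfl fun i hi ↦ ?_
        rw [mul_pow, ← pow_mul, mul_comm i, integral_norm_sq_eq_toReal_eLpNorm_sq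
          (memLp_iteratedFDeriv_of_contDiffAt_closure (p := 2) (Finset.mem_Icc.1 hi).2 hBb hf
            hmemB).aestronglyMeasurable]

theorem setIntegral_norm_sub_weightedAverage_sq_le_sum (hm : Module.finrank ℝ E < 2 * m)
    (hB : Convex ℝ B) (hBm : MeasurableSet B) (hBb : Bornology.IsBounded B)
    (hf : ∀ x ∈ closure B, ContDiffAt ℝ m f x) {U : Set E} (hU : U ⊆ B) {ψ : E → ℝ}
    (hψ : IntegrableOn ψ U μ) (hψ0 : 0 ≤ᵐ[μ.restrict U] ψ) (hψpos : 0 < ∫ x in U, ψ x ∂μ) :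
    ∫ x in U, ‖f x - (∫ y in U, ψ y ∂μ)⁻¹ • ∫ y in U, ψ y • f y ∂μ‖ ^ 2 ∂μ ≤
      4 * m * ∑ i ∈ Finset.Icc 1 m,
        diam B ^ (2 * i) * ∫ x in B, ‖iteratedFDeriv ℝ i f x‖ ^ 2 ∂μ := by
  set ν : Measure E := (μ.restrict U).withDensity fun x ↦ ENNReal.ofReal (ψ x)
  have hUB : μ.restrict U ≤ μ.restrict B := Measure.restrict_mono hU le_rfl
  have : IsFiniteMeasure ν := isFiniteMeasure_withDensity_ofReal hψ.2
  have : NeZero ν := ⟨fun hν ↦ hψpos.ne' <| integral_eq_zero_of_ae <| by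
    filter_upwards [withDensity_eq_zero hψ.1.aemeasurable.ennreal_ofReal hν, hψ0] with x hx hx0
    exact (ENNReal.ofReal_eq_zero.1 hx).antisymm hx0⟩
  have hνB : ∀ᵐ y ∂ν, y ∈ B :=
    ((withDensity_absolutelyContinuous _ _).trans hUB.absolutelyContinuous).ae_le
      (ae_restrict_mem hBm)
  have hfB : ContinuousOn f (closure B) := fun x hx ↦ (hf x hx).continuousAt.continuousWithinAt
  have hint : IntegrableOn (fun x ↦ ‖f x - ⨍ y, f y ∂ν‖ ^ 2) B μ :=
    (((hfB.sub continuousOn_const).norm.pow 2).integrableOn_compact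
      hBb.isCompact_closure).mono_set subset_closure
  rw [← average_withDensity_ofReal hψ.1.aemeasurable hψ0]
  exact (integral_mono_measure hUB (.of_forall fun x ↦ sq_nonneg _) hint).trans
    (setIntegral_norm_sub_average_sq_le_sum μ hm hB hBm hBb hf hνB)

theorem stmt_18_general (hm : Module.finrank ℝ E < 2 * m) :
    ∃ C : ℝ, 0 < C ∧ ∀ (x₀ : E) (r : ℝ), 0 < r → ∀ f : E → F,
      (∀ x ∈ closedBall x₀ r, ContDiffAt ℝ m f x) → ∀ U ⊆ ball x₀ r, ∀ ψ : E → ℝ,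
      IntegrableOn ψ U μ → 0 ≤ᵐ[μ.restrict U] ψ → 0 < (∫ x in U, ψ x ∂μ) →
      ∫ x in U, ‖f x - (∫ y in U, ψ y ∂μ)⁻¹ • ∫ y in U, ψ y • f y ∂μ‖ ^ 2 ∂μ ≤
        C * ∑ i ∈ Finset.Icc 1 m,
          r ^ (2 * i) * ∫ x in ball x₀ r, ‖iteratedFDeriv ℝ i f x‖ ^ 2 ∂μ := by
  have hm0 : 0 < m := by omega
  refine ⟨4 * m * 4 ^ m, by positivity, fun x₀ r hr f hf U hU ψ hψ hψ0 hψpos ↦ ?_⟩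
  refine (setIntegral_norm_sub_weightedAverage_sq_le_sum μ hm (convex_ball x₀ r) measurableSet_ball
    isBounded_ball (fun x hx ↦ hf x (closure_ball_subset_closedBall hx)) hU hψ hψ0 hψpos).trans ?_
  rw [mul_assoc (4 * (m : ℝ)) (4 ^ m), Finset.mul_sum _ _ (4 ^ m : ℝ)]
  refine mul_le_mul_of_nonneg_left (Finset.sum_le_sum fun i hi ↦ ?_) (by positivity)
  rw [← mul_assoc]
  refine mul_le_mul_of_nonneg_right ?_ (integral_nonneg fun x ↦ sq_nonneg _)
  calc diam (ball x₀ r) ^ (2 * i) ≤ (2 * r) ^ (2 * i) := by gcongr; exact diam_ball hr.le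
    _ = 4 ^ i * r ^ (2 * i) := by rw [mul_pow, pow_mul]; norm_num
    _ ≤ 4 ^ m * r ^ (2 * i) := by
        gcongr
        exacts [by norm_num, (Finset.mem_Icc.1 hi).2]

end SquareIntegral

/-- Local Poincaré-type inequality (Euclidean model of Lemma 4.3): for `m > d/2`
there is `C = C(d,m)` such that for every ball `B(x₀,r) ⊆ ℝ^d`, every `f` which is
`C^m` on a neighborhood of the closed ball, every measurable `U ⊆ B(x₀, r/2)` and
every weight `ψ ∈ C₀^∞(U)`, `0 ≤ ψ`, `ψ ≢ 0`, the deviation of `f` from its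
`ψ`-average `Ψ(f) = (∫_U ψ)⁻¹ ∫_U f ψ` satisfies
`‖f - Ψ(f)‖²_{L²(U)} ≤ C ∑_{1 ≤ i ≤ m} r^{2i} ‖D^i f‖²_{L²(B(x₀,r))}`. -/
theorem stmt_18 (d m : ℕ) (hm : d < 2 * m) :
    ∃ C : ℝ, 0 < C ∧
      ∀ (x₀ : EuclideanSpace ℝ (Fin d)) (r : ℝ), 0 < r →
      ∀ f : EuclideanSpace ℝ (Fin d) → ℝ,
        (∃ V : Set (EuclideanSpace ℝ (Fin d)), IsOpen V ∧ closedBall x₀ r ⊆ V ∧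
          ContDiffOn ℝ (m : ℕ∞) f V) →
      ∀ U : Set (EuclideanSpace ℝ (Fin d)), MeasurableSet U → U ⊆ ball x₀ (r / 2) →
      ∀ ψ : EuclideanSpace ℝ (Fin d) → ℝ,
        ContDiff ℝ (⊤ : ℕ∞) ψ → HasCompactSupport ψ → tsupport ψ ⊆ U →
        (∀ x, 0 ≤ ψ x) → 0 < (∫ x in U, ψ x) →
        (∫ x in U, (f x - (∫ y in U, ψ y)⁻¹ * ∫ y in U, f y * ψ y) ^ 2) ≤
          C * ∑ i ∈ Finset.Icc 1 m,
            r ^ (2 * i) * ∫ x in ball x₀ r, ‖iteratedFDeriv ℝ i f x‖ ^ 2 := by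
  obtain ⟨C, hC, h⟩ := stmt_18_general (F := ℝ) (m := m)
    (volume : Measure (EuclideanSpace ℝ (Fin d))) (by simpa using hm)
  refine ⟨C, hC, fun x₀ r hr f ⟨V, hV, hBV, hfV⟩ U _ hU ψ hψ hψc _ hψ0 hψpos ↦ ?_⟩
  simpa [mul_comm] using h x₀ r hr f (fun x hx ↦ hfV.contDiffAt (hV.mem_nhds (hBV hx))) U
    (hU.trans (ball_subset_ball (half_le_self hr.le))) ψ
    (hψ.continuous.integrable_of_hasCompactSupport hψc).integrableOn (.of_forall hψ0) hψpos
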